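/- Let a, b, c be integers with a, b nonzero and let B be the 4×4 skew-symmetric integer matrix with rows (0, -a, c, -a-c), (a, 0, -c, a+c), (-c, c, 0, -b), (a+c, -a-c, b, 0). Then the gcd of all entries of B is gcd(a, b, c), and the gcd of all 3×3 minors of B is a*b*gcd(a,b,c). Consequently the invariant factors of B are h1, h1, h2, h2 with h1 = gcd(a,b,c) and h2 = a*b/gcd(a,b,c). -/

import Mathlib

/-- Modulo a nonzero `a`, the line `c + t b` meets the units as soon as `a, b, c` have no common
prime factor. -/
theorem exists_isCoprime_add_mul (a b c : ℤ) (ha : a ≠ 0)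
    (h : ∀ p : ℤ, Prime p → p ∣ a → p ∣ b → ¬ p ∣ c) : ∃ t : ℤ, IsCoprime a (c + t * b) := by
  classical
  refine ⟨((∏ p ∈ a.natAbs.primeFactors.filter (fun p : ℕ => ¬ (p : ℤ) ∣ c), p : ℕ) : ℤ), ?_⟩
  refine isCoprime_of_prime_dvd (fun h0 => ha h0.1) fun p hp hpa hpw => ?_
  have hq : Nat.Prime p.natAbs := Int.prime_iff_natAbs_prime.1 hp
  by_cases hpc : p ∣ c
  · rcases hp.dvd_or_dvd ((dvd_add_right hpc).1 hpw) with hd | hd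
    · push_cast at hd
      obtain ⟨q, hqm, hpq⟩ := hp.exists_mem_finset_dvd hd
      simp only [Finset.mem_filter, Nat.mem_primeFactors] at hqm
      have e : p.natAbs = q :=
        (Nat.prime_dvd_prime_iff_eq hq hqm.1.1).1 (Int.natAbs_dvd_natAbs.2 hpq)
      exact hqm.2 (by rw [← e]; exact Int.natAbs_dvd.2 hpc)
    · exact h p hp hpa hd hpc
  · refine hpc ((dvd_add_left (Dvd.dvd.mul_right ?_ b)).1 hpw)
    rw [← Int.natAbs_dvd]
    refine Int.natCast_dvd_natCast.2 (Finset.dvd_prod_of_mem _ ?_)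
    simp only [Finset.mem_filter, Nat.mem_primeFactors]
    exact ⟨⟨hq, Int.natAbs_dvd_natAbs.2 hpa, by simpa using ha⟩,
      fun h' => hpc (Int.natAbs_dvd.1 h')⟩

/-- Three integers, the first nonzero, are `g = gcd(a, b, c)` times cofactors, with a Bézout
relation between `a / g` and some `(c + t b) / g`. -/
theorem exists_bezout_gcd_gcd (a b c : ℤ) (ha : a ≠ 0) :
    ∃ a' b' c' t x y : ℤ,
      a = (Int.gcd (Int.gcd a b) c : ℤ) * a' ∧ b = (Int.gcd (Int.gcd a b) c : ℤ) * b' ∧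
      c = (Int.gcd (Int.gcd a b) c : ℤ) * c' ∧ (c' + t * b') * y - a' * x = 1 := by
  set g : ℤ := ((Int.gcd (Int.gcd a b) c : ℕ) : ℤ) with hg
  have hgab : g ∣ Int.gcd a b := Int.gcd_dvd_left _ _
  obtain ⟨a', ha'⟩ : g ∣ a := hgab.trans (Int.gcd_dvd_left _ _)
  obtain ⟨b', hb'⟩ : g ∣ b := hgab.trans (Int.gcd_dvd_right _ _)
  obtain ⟨c', hc'⟩ : g ∣ c := Int.gcd_dvd_right _ _
  have hg0 : g ≠ 0 := fun h => ha (by rw [ha', h, zero_mul])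
  obtain ⟨t, u, v, huv⟩ := exists_isCoprime_add_mul a' b' c'
    (fun h => ha (by rw [ha', h, mul_zero])) fun p hp h1 h2 h3 => by
      have : g * p ∣ g := by
        conv_rhs => rw [hg]
        refine Int.dvd_coe_gcd (Int.dvd_coe_gcd ?_ ?_) ?_
        · rw [ha']; exact mul_dvd_mul_left g h1
        · rw [hb']; exact mul_dvd_mul_left g h2
        · rw [hc']; exact mul_dvd_mul_left g h3
      exact hp.not_isUnit (isUnit_of_dvd_one ((mul_dvd_mul_iff_left hg0).1 (by simpa using this)))
  exact ⟨a', b', c', t, -u, v, ha', hb', hc', by linear_combination huv⟩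

/-- The skew-symmetric relation matrix with parameters `a, b, c`. -/
def relationMatrix (a b c : ℤ) : Matrix (Fin 4) (Fin 4) ℤ :=
  !![0, -a, c, -a - c;
     a, 0, -c, a + c;
     -c, c, 0, -b;
     a + c, -a - c, b, 0]

theorem dvd_relationMatrix_apply {a b c g : ℤ} (da : g ∣ a) (db : g ∣ b) (dc : g ∣ c)
    (i j : Fin 4) : g ∣ relationMatrix a b c i j := by
  fin_cases i <;> fin_cases j <;> simp [relationMatrix, da, db, dc, dvd_add, dvd_sub]

theorem mul_mul_dvd_minor_relationMatrix {a b c g : ℤ} (da : g ∣ a) (db : g ∣ b) (dc : g ∣ c)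
    (i j : Fin 4) :
    a * b * g ∣ ((relationMatrix a b c).submatrix i.succAbove j.succAbove).det := by
  have hm (e f : ℤ) (he : g ∣ e) (hf : f = a * b * e) : a * b * g ∣ f :=
    hf ▸ mul_dvd_mul_left _ he
  fin_cases i <;> fin_cases j <;>
    simp [relationMatrix, Matrix.det_fin_three, Fin.succAbove]
  all_goals first
    | exact hm 0 _ (dvd_zero g) (by ring1)
    | exact hm a _ da (by ring1)
    | exact hm (-a) _ da.neg_right (by ring1)
    | exact hm b _ db (by ring1)
    | exact hm (-b) _ db.neg_right (by ring1)
    | exact hm c _ dc (by ring1)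
    | exact hm (-c) _ dc.neg_right (by ring1)
    | exact hm (a + c) _ (dvd_add da dc) (by ring1)
    | exact hm (-(a + c)) _ (dvd_add da dc).neg_right (by ring1)

theorem dvd_mul_mul_gcd_of_dvd_minor_relationMatrix {a b c G : ℤ}
    (h : ∀ i j : Fin 4, G ∣ ((relationMatrix a b c).submatrix i.succAbove j.succAbove).det) :
    G ∣ a * b * Int.gcd (Int.gcd a b) c := by
  have ka : G ∣ a * b * a := by
    rw [← dvd_neg]
    have e : ((relationMatrix a b c).submatrix (Fin.succAbove 3) (Fin.succAbove 2)).det =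
        -(a * b * a) := by
      simp [relationMatrix, Matrix.det_fin_three, Fin.succAbove]
      ring
    exact e ▸ h 3 2
  have kb : G ∣ a * b * b := by
    rw [← dvd_neg]
    have e : ((relationMatrix a b c).submatrix (Fin.succAbove 1) (Fin.succAbove 0)).det =
        -(a * b * b) := by
      simp [relationMatrix, Matrix.det_fin_three, Fin.succAbove]
      ring
    exact e ▸ h 1 0
  have kc : G ∣ a * b * c := by
    have e : ((relationMatrix a b c).submatrix (Fin.succAbove 3) (Fin.succAbove 1)).det =
        (a * b * c) := by
      simp [relationMatrix, Matrix.det_fin_three, Fin.succAbove]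
      ring
    exact e ▸ h 3 1
  rw [Int.gcd_eq_gcd_ab (Int.gcd a b) c, Int.gcd_eq_gcd_ab a b]
  generalize Int.gcdA a b = u, Int.gcdB a b = v
  simp only [mul_add, add_mul, ← mul_assoc]
  exact dvd_add (dvd_add ((ka.mul_right _).mul_right _) ((kb.mul_right _).mul_right _))
    (kc.mul_right _)

theorem exists_mul_relationMatrix_mul_eq_diagonal {g a b c t x y : ℤ}
    (h : (c + t * b) * y - a * x = 1) :
    ∃ P Q : Matrix (Fin 4) (Fin 4) ℤ, IsUnit P.det ∧ IsUnit Q.det ∧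
      P * relationMatrix (g * a) (g * b) (g * c) * Q =
        Matrix.diagonal ![g, g, g * a * b, g * a * b] := by
  refine ⟨!![1 - t, -t, t, t;
             -x, -x, -y, 0;
             b * y + (1 - b * y * t), 1 - b * y * t, -(1 - b * y * t), -(1 - b * y * t);
             c + t * b, c + t * b, a, 0],
          !![x, 1 - t, -(c + t * b), b * y + (1 - b * y * t);
             x, -t, -(c + t * b), 1 - b * y * t;
             y, t, -a, -(1 - b * y * t);
             0, t, 0, -(1 - b * y * t)], ?_, ?_, ?_⟩
  · refine Int.isUnit_iff.2 (Or.inl ?_)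
    simp [Matrix.det_succ_row_zero, Fin.sum_univ_succ, Fin.succAbove]
    linear_combination h
  · refine Int.isUnit_iff.2 (Or.inl ?_)
    simp [Matrix.det_succ_row_zero, Fin.sum_univ_succ, Fin.succAbove]
    linear_combination h
  · ext i j
    fin_cases i <;> fin_cases j <;>
      simp [relationMatrix, Matrix.mul_apply, Fin.sum_univ_four]
    all_goals first
      | ring1
      | linear_combination g * h
      | linear_combination (g * b * y) * h

theorem stmt_10 (a b c : ℤ) (ha : a ≠ 0) (hb : b ≠ 0) :
    let B : Matrix (Fin 4) (Fin 4) ℤ :=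
      !![0, -a, c, -a - c;
         a, 0, -c, a + c;
         -c, c, 0, -b;
         a + c, -a - c, b, 0]
    let h1 : ℤ := Int.gcd (Int.gcd a b) c
    let h2 : ℤ := a * b / Int.gcd (Int.gcd a b) c
    -- the gcd of all entries of B is gcd(a, b, c)
    (Finset.univ.gcd (fun p : Fin 4 × Fin 4 => B p.1 p.2) = h1) ∧
    -- the gcd of all 3×3 minors of B is a*b*gcd(a,b,c) (up to units)
    Associated
      (Finset.univ.gcd (fun p : Fin 4 × Fin 4 =>
        (B.submatrix p.1.succAbove p.2.succAbove).det))
      (a * b * h1) ∧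
    -- the invariant factors of B are h1, h1, h2, h2
    (∃ P Q : Matrix (Fin 4) (Fin 4) ℤ, IsUnit P.det ∧ IsUnit Q.det ∧
      P * B * Q = Matrix.diagonal ![h1, h1, h2, h2]) := by
  intro B h1 h2
  obtain ⟨a', b', c', t, x, y, ha', hb', hc', hxy⟩ := exists_bezout_gcd_gcd a b c ha
  change a = h1 * a' at ha'
  change b = h1 * b' at hb'
  change c = h1 * c' at hc'
  have h1_ne : h1 ≠ 0 := fun h => ha (by rw [ha', h, zero_mul])
  have da : h1 ∣ a := ⟨a', ha'⟩
  have db : h1 ∣ b := ⟨b', hb'⟩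
  have dc : h1 ∣ c := ⟨c', hc'⟩
  have hB : B = relationMatrix a b c := rfl
  clear_value B
  subst hB
  refine ⟨?_, ?_, ?_⟩
  · refine Int.dvd_antisymm (Int.nonneg_of_normalize_eq_self Finset.normalize_gcd)
      (Int.natCast_nonneg _) ?_
      (Finset.dvd_gcd fun p _ => dvd_relationMatrix_apply da db dc p.1 p.2)
    have key (i j : Fin 4) := Finset.gcd_dvd
      (f := fun p : Fin 4 × Fin 4 => relationMatrix a b c p.1 p.2) (Finset.mem_univ (i, j))
    exact Int.dvd_coe_gcd (Int.dvd_coe_gcd (key 1 0) (key 3 2)) (key 0 2)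
  · refine associated_of_dvd_dvd
      (dvd_mul_mul_gcd_of_dvd_minor_relationMatrix fun i j => ?_)
      (Finset.dvd_gcd fun p _ => mul_mul_dvd_minor_relationMatrix da db dc p.1 p.2)
    refine (Finset.gcd_dvd (Finset.mem_univ (i, j))).trans ?_
    dsimp only
    exact dvd_rfl
  · have hh2 : h2 = h1 * a' * b' := by
      change a * b / h1 = _
      rw [hb', mul_left_comm, Int.mul_ediv_cancel_left _ h1_ne, ← ha']
    have hB : relationMatrix a b c = relationMatrix (h1 * a') (h1 * b') (h1 * c') := by
      rw [← ha', ← hb', ← hc']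
    rw [hh2, hB]
    exact exists_mul_relationMatrix_mul_eq_diagonal hxy
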